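/- If ψ₁, ψ₂, ψ₃ : U → ℝ are C³ functions solving the Liouville linear system (with A₀, A₁, A₂, A₃ of class C³), then the linear compatibility condition V₁ψ₁ + V₂ψ₂ + V₃ψ₃ − 10 L₂ ∂ₓψ₂ − 10 L₁ ∂_yψ₂ = 0 holds identically on U. -/

import Mathlib

/-!
Adjoining `ψ₄ = 2∂ₓψ₂`, `ψ₅ = 2∂_yψ₂` and `ψ₆ = 2∂ₓ∂_yψ₂` to the unknowns closes the Liouville
system: cross-differentiating its equations gives `∂ₓΨ = XΨ` and `∂_yΨ = YΨ` for
`Ψ = (ψ₁, …, ψ₆)`, with matrices `X` and `Y` that depend on the `Aᵢ` alone. Since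
`∂_y∂ₓΨ = ∂ₓ∂_yΨ`, every solution is annihilated by the curvature `X_y - Y_x + XY - YX`. The last
row of the curvature is `V`, and `V · Ψ = 0` is the compatibility condition.
-/

noncomputable section

open Matrix

/-- Partial derivative in the first (x) variable. -/
def pdx (f : ℝ × ℝ → ℝ) : ℝ × ℝ → ℝ :=
  fun p => deriv (fun t => f (t, p.2)) p.1

/-- Partial derivative in the second (y) variable. -/
def pdy (f : ℝ × ℝ → ℝ) : ℝ × ℝ → ℝ :=
  fun p => deriv (fun t => f (p.1, t)) p.2

/-- `pd 0 = ∂ₓ`, `pd 1 = ∂_y`. -/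
def pd : Fin 2 → (ℝ × ℝ → ℝ) → (ℝ × ℝ → ℝ) := ![pdx, pdy]

/-- The Liouville linear system associated to `(A0, A1, A2, A3)`, holding on `U`. -/
def LiouvilleSystem (U : Set (ℝ × ℝ)) (A0 A1 A2 A3 ψ1 ψ2 ψ3 : ℝ × ℝ → ℝ) : Prop :=
  ∀ p ∈ U,
    pdx ψ1 p = (2/3) * A1 p * ψ1 p - 2 * A0 p * ψ2 p ∧
    pdy ψ3 p = 2 * A3 p * ψ2 p - (2/3) * A2 p * ψ3 p ∧
    pdy ψ1 p + 2 * pdx ψ2 p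
      = (4/3) * A2 p * ψ1 p - (2/3) * A1 p * ψ2 p - 2 * A0 p * ψ3 p ∧
    pdx ψ3 p + 2 * pdy ψ2 p
      = 2 * A3 p * ψ1 p - (4/3) * A1 p * ψ3 p + (2/3) * A2 p * ψ2 p

/-- `(A0, A1, A2, A3)` is metrisable near `p` (within `U`). -/
def MetrisableNear (U : Set (ℝ × ℝ)) (A0 A1 A2 A3 : ℝ × ℝ → ℝ) (p : ℝ × ℝ) : Prop :=
  ∃ V : Set (ℝ × ℝ), IsOpen V ∧ p ∈ V ∧ V ⊆ U ∧
    ∃ E F G : ℝ × ℝ → ℝ,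
      ContDiffOn ℝ (⊤ : ℕ∞) E V ∧ ContDiffOn ℝ (⊤ : ℕ∞) F V ∧ ContDiffOn ℝ (⊤ : ℕ∞) G V ∧
      (∀ q ∈ V, E q * G q - (F q) ^ 2 ≠ 0) ∧
      (∀ q ∈ V,
        A0 q = (E q * pdy E q - 2 * E q * pdx F q + F q * pdx E q)
                 / (2 * (E q * G q - (F q) ^ 2)) ∧
        A1 q = (3 * F q * pdy E q + G q * pdx E q - 2 * F q * pdx F q - 2 * E q * pdx G q)
                 / (2 * (E q * G q - (F q) ^ 2)) ∧
        A2 q = (2 * F q * pdy F q + 2 * G q * pdy E q - 3 * F q * pdx G q - E q * pdy G q)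
                 / (2 * (E q * G q - (F q) ^ 2)) ∧
        A3 q = (2 * G q * pdy F q - G q * pdx G q - F q * pdy G q)
                 / (2 * (E q * G q - (F q) ^ 2)))

end
noncomputable section

/-- Liouville's first projective invariant `L₁`. -/
def Lio1 (A0 A1 A2 A3 : ℝ × ℝ → ℝ) : ℝ × ℝ → ℝ := fun p =>
  (2/3) * pdx (pdy A1) p - (1/3) * pdx (pdx A2) p - pdy (pdy A0) p
    + A0 p * pdy A2 p + A2 p * pdy A0 p - A3 p * pdx A0 p - 2 * A0 p * pdx A3 p
    - (2/3) * A1 p * pdy A1 p + (1/3) * A1 p * pdx A2 p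

/-- Liouville's second projective invariant `L₂`. -/
def Lio2 (A0 A1 A2 A3 : ℝ × ℝ → ℝ) : ℝ × ℝ → ℝ := fun p =>
  (2/3) * pdx (pdy A2) p - (1/3) * pdy (pdy A1) p - pdx (pdx A3) p
    - A3 p * pdx A1 p - A1 p * pdx A3 p + A0 p * pdy A3 p + 2 * A3 p * pdy A0 p
    + (2/3) * A2 p * pdx A2 p - (1/3) * A2 p * pdy A1 p

/-- The row vector `V = (V₁,…,V₆)`. -/
def Vrow (A0 A1 A2 A3 : ℝ × ℝ → ℝ) : ℝ × ℝ → Fin 6 → ℝ := fun p =>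
  ![2 * pdy (Lio2 A0 A1 A2 A3) p + 4 * A2 p * Lio2 A0 A1 A2 A3 p
      + 8 * A3 p * Lio1 A0 A1 A2 A3 p,
    -2 * pdy (Lio1 A0 A1 A2 A3) p - 2 * pdx (Lio2 A0 A1 A2 A3) p
      - (4/3) * A1 p * Lio2 A0 A1 A2 A3 p + (4/3) * A2 p * Lio1 A0 A1 A2 A3 p,
    2 * pdx (Lio1 A0 A1 A2 A3) p - 8 * A0 p * Lio2 A0 A1 A2 A3 p
      - 4 * A1 p * Lio1 A0 A1 A2 A3 p,
    -5 * Lio2 A0 A1 A2 A3 p,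
    -5 * Lio1 A0 A1 A2 A3 p,
    0]


end

open Filter Matrix Set Topology

section Partials

variable {f g : ℝ × ℝ → ℝ} {p : ℝ × ℝ}

theorem hasDerivAt_pdx (hf : DifferentiableAt ℝ f p) :
    HasDerivAt (fun t => f (t, p.2)) (pdx f p) p.1 := by
  refine DifferentiableAt.hasDerivAt (f := fun t => f (t, p.2)) ?_
  fun_prop

theorem hasDerivAt_pdy (hf : DifferentiableAt ℝ f p) :
    HasDerivAt (fun t => f (p.1, t)) (pdy f p) p.2 := by
  refine DifferentiableAt.hasDerivAt (f := fun t => f (p.1, t)) ?_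
  fun_prop

theorem pdx_eq_fderiv (hf : DifferentiableAt ℝ f p) : pdx f p = fderiv ℝ f p (1, 0) :=
  (hf.hasFDerivAt.comp_hasDerivAt p.1
    ((hasDerivAt_id p.1).prodMk (hasDerivAt_const p.1 p.2))).deriv

theorem pdy_eq_fderiv (hf : DifferentiableAt ℝ f p) : pdy f p = fderiv ℝ f p (0, 1) :=
  (hf.hasFDerivAt.comp_hasDerivAt p.2
    ((hasDerivAt_const p.2 p.1).prodMk (hasDerivAt_id p.2))).deriv

theorem pdx_const (c : ℝ) : pdx (fun _ => c) p = 0 := deriv_const _ _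

theorem pdy_const (c : ℝ) : pdy (fun _ => c) p = 0 := deriv_const _ _

theorem pdx_add (hf : DifferentiableAt ℝ f p) (hg : DifferentiableAt ℝ g p) :
    pdx (fun q => f q + g q) p = pdx f p + pdx g p :=
  ((hasDerivAt_pdx hf).add (hasDerivAt_pdx hg)).deriv

theorem pdy_add (hf : DifferentiableAt ℝ f p) (hg : DifferentiableAt ℝ g p) :
    pdy (fun q => f q + g q) p = pdy f p + pdy g p :=
  ((hasDerivAt_pdy hf).add (hasDerivAt_pdy hg)).deriv

theorem pdx_sub (hf : DifferentiableAt ℝ f p) (hg : DifferentiableAt ℝ g p) :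
    pdx (fun q => f q - g q) p = pdx f p - pdx g p :=
  ((hasDerivAt_pdx hf).sub (hasDerivAt_pdx hg)).deriv

theorem pdy_sub (hf : DifferentiableAt ℝ f p) (hg : DifferentiableAt ℝ g p) :
    pdy (fun q => f q - g q) p = pdy f p - pdy g p :=
  ((hasDerivAt_pdy hf).sub (hasDerivAt_pdy hg)).deriv

theorem pdx_mul (hf : DifferentiableAt ℝ f p) (hg : DifferentiableAt ℝ g p) :
    pdx (fun q => f q * g q) p = pdx f p * g p + f p * pdx g p :=
  ((hasDerivAt_pdx hf).mul (hasDerivAt_pdx hg)).deriv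

theorem pdy_mul (hf : DifferentiableAt ℝ f p) (hg : DifferentiableAt ℝ g p) :
    pdy (fun q => f q * g q) p = pdy f p * g p + f p * pdy g p :=
  ((hasDerivAt_pdy hf).mul (hasDerivAt_pdy hg)).deriv

theorem pdx_sum {ι : Type*} {s : Finset ι} {F : ι → ℝ × ℝ → ℝ}
    (hF : ∀ i ∈ s, DifferentiableAt ℝ (F i) p) :
    pdx (fun q => ∑ i ∈ s, F i q) p = ∑ i ∈ s, pdx (F i) p :=
  (HasDerivAt.fun_sum fun i hi => hasDerivAt_pdx (hF i hi)).deriv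

theorem pdy_sum {ι : Type*} {s : Finset ι} {F : ι → ℝ × ℝ → ℝ}
    (hF : ∀ i ∈ s, DifferentiableAt ℝ (F i) p) :
    pdy (fun q => ∑ i ∈ s, F i q) p = ∑ i ∈ s, pdy (F i) p :=
  (HasDerivAt.fun_sum fun i hi => hasDerivAt_pdy (hF i hi)).deriv

theorem pdx_congr (h : f =ᶠ[𝓝 p] g) : pdx f p = pdx g p := by
  have hslice : Tendsto (fun t : ℝ => (t, p.2)) (𝓝 p.1) (𝓝 p) :=
    Continuous.tendsto (by fun_prop) p.1
  exact (h.comp_tendsto hslice).deriv_eq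

theorem pdy_congr (h : f =ᶠ[𝓝 p] g) : pdy f p = pdy g p := by
  have hslice : Tendsto (fun t : ℝ => (p.1, t)) (𝓝 p.2) (𝓝 p) :=
    Continuous.tendsto (by fun_prop) p.2
  exact (h.comp_tendsto hslice).deriv_eq

end Partials

section Smoothness

variable {f : ℝ × ℝ → ℝ} {p : ℝ × ℝ} {m n : WithTop ℕ∞}

theorem eventually_differentiableAt_of_contDiffAt (hf : ContDiffAt ℝ n f p) (hn : n ≠ 0) :
    ∀ᶠ q in 𝓝 p, DifferentiableAt ℝ f q :=
  ((hf.of_le (ENat.one_le_iff_ne_zero_withTop.2 hn)).eventually (by simp)).mono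
    fun _ hq => hq.differentiableAt one_ne_zero

theorem contDiffAt_pdx (hf : ContDiffAt ℝ n f p) (hmn : m + 1 ≤ n) : ContDiffAt ℝ m (pdx f) p := by
  have hn : n ≠ 0 := by rintro rfl; simp at hmn
  have hfderiv : pdx f =ᶠ[𝓝 p] fun q => fderiv ℝ f q (1, 0) :=
    (eventually_differentiableAt_of_contDiffAt hf hn).mono fun _ => pdx_eq_fderiv
  exact ((hf.fderiv_right hmn).clm_apply contDiffAt_const).congr_of_eventuallyEq hfderiv

theorem contDiffAt_pdy (hf : ContDiffAt ℝ n f p) (hmn : m + 1 ≤ n) : ContDiffAt ℝ m (pdy f) p := by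
  have hn : n ≠ 0 := by rintro rfl; simp at hmn
  have hfderiv : pdy f =ᶠ[𝓝 p] fun q => fderiv ℝ f q (0, 1) :=
    (eventually_differentiableAt_of_contDiffAt hf hn).mono fun _ => pdy_eq_fderiv
  exact ((hf.fderiv_right hmn).clm_apply contDiffAt_const).congr_of_eventuallyEq hfderiv

/- The `fun_prop` lemmas fix the order of smoothness because `fun_prop` does not solve side goals of
the form `m + 1 ≤ n`. -/
@[fun_prop]
theorem contDiffAt_two_of_contDiffAt_three (hf : ContDiffAt ℝ 3 f p) : ContDiffAt ℝ 2 f p :=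
  hf.of_le (by norm_num)

@[fun_prop]
theorem differentiableAt_of_contDiffAt_three (hf : ContDiffAt ℝ 3 f p) : DifferentiableAt ℝ f p :=
  hf.differentiableAt (by norm_num)

@[fun_prop]
theorem differentiableAt_of_contDiffAt_two (hf : ContDiffAt ℝ 2 f p) : DifferentiableAt ℝ f p :=
  hf.differentiableAt (by norm_num)

@[fun_prop]
theorem contDiffAt_two_pdx (hf : ContDiffAt ℝ 3 f p) : ContDiffAt ℝ 2 (pdx f) p :=
  contDiffAt_pdx hf (by norm_num)

@[fun_prop]
theorem contDiffAt_two_pdy (hf : ContDiffAt ℝ 3 f p) : ContDiffAt ℝ 2 (pdy f) p :=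
  contDiffAt_pdy hf (by norm_num)

@[fun_prop]
theorem differentiableAt_pdx (hf : ContDiffAt ℝ 2 f p) : DifferentiableAt ℝ (pdx f) p :=
  (contDiffAt_pdx (m := 1) hf (by norm_num)).differentiableAt one_ne_zero

@[fun_prop]
theorem differentiableAt_pdy (hf : ContDiffAt ℝ 2 f p) : DifferentiableAt ℝ (pdy f) p :=
  (contDiffAt_pdy (m := 1) hf (by norm_num)).differentiableAt one_ne_zero

/- Symmetry of second derivatives, asking only for differentiability of `F` and `G`: continuity of
their derivatives is not available for the last unknown of the prolonged system. -/
theorem pdy_eq_pdx_of_eventuallyEq {F G : ℝ × ℝ → ℝ}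
    (hf : ∀ᶠ q in 𝓝 p, DifferentiableAt ℝ f q) (hx : pdx f =ᶠ[𝓝 p] F) (hy : pdy f =ᶠ[𝓝 p] G)
    (hF : DifferentiableAt ℝ F p) (hG : DifferentiableAt ℝ G p) : pdy F p = pdx G p := by
  have hdf : ∀ᶠ q in 𝓝 p, HasFDerivAt f
      (F q • ContinuousLinearMap.fst ℝ ℝ ℝ + G q • ContinuousLinearMap.snd ℝ ℝ ℝ) q := by
    filter_upwards [hf, hx, hy] with q hq hxq hyq
    refine hq.hasFDerivAt.congr_fderiv ?_
    ext <;> simp [← hxq, ← hyq, pdx_eq_fderiv hq, pdy_eq_fderiv hq]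
  have hd2f := (hF.hasFDerivAt.smul_const (ContinuousLinearMap.fst ℝ ℝ ℝ)).add
    (hG.hasFDerivAt.smul_const (ContinuousLinearMap.snd ℝ ℝ ℝ))
  have hsymm := second_derivative_symmetric_of_eventually hdf hd2f (0, 1) (1, 0)
  simpa [pdx_eq_fderiv hG, pdy_eq_fderiv hF] using hsymm

theorem pdy_pdx (hf : ContDiffAt ℝ 2 f p) : pdy (pdx f) p = pdx (pdy f) p :=
  pdy_eq_pdx_of_eventuallyEq (eventually_differentiableAt_of_contDiffAt hf two_ne_zero)
    .rfl .rfl (differentiableAt_pdx hf) (differentiableAt_pdy hf)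

theorem pdx_pdy_pdx (hf : ContDiffAt ℝ 3 f p) : pdx (pdy (pdx f)) p = pdx (pdx (pdy f)) p :=
  pdx_congr (((contDiffAt_two_of_contDiffAt_three hf).eventually (by simp)).mono
    fun _ => pdy_pdx)

end Smoothness

section Parallel

variable {ι : Type*} [Fintype ι] {U : Set (ℝ × ℝ)} {X Y : ℝ × ℝ → Matrix ι ι ℝ}
  {Ψ : ℝ × ℝ → ι → ℝ} {p : ℝ × ℝ}

/-- `Ψ` is a differentiable solution on `U` of the closed linear system `∂ₓΨ = XΨ`, `∂_yΨ = YΨ`,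
i.e. a parallel section of the connection `d - X dx - Y dy`. -/
structure IsParallelOn (U : Set (ℝ × ℝ)) (X Y : ℝ × ℝ → Matrix ι ι ℝ) (Ψ : ℝ × ℝ → ι → ℝ) :
    Prop where
  differentiableOn : ∀ i, DifferentiableOn ℝ (fun q => Ψ q i) U
  pdx_eq : ∀ i, EqOn (pdx fun q => Ψ q i) (fun q => (X q *ᵥ Ψ q) i) U
  pdy_eq : ∀ i, EqOn (pdy fun q => Ψ q i) (fun q => (Y q *ᵥ Ψ q) i) U

/-- The curvature `X_y - Y_x + [X, Y]` of the connection `d - X dx - Y dy`. -/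
noncomputable def curvature (X Y : ℝ × ℝ → Matrix ι ι ℝ) (p : ℝ × ℝ) : Matrix ι ι ℝ :=
  Matrix.of (fun i j => pdy (fun q => X q i j) p - pdx (fun q => Y q i j) p)
    + (X p * Y p - Y p * X p)

theorem IsParallelOn.curvature_mulVec_eq_zero (h : IsParallelOn U X Y Ψ) (hU : IsOpen U)
    (hp : p ∈ U) {i : ι} (hX : ∀ j, DifferentiableAt ℝ (fun q => X q i j) p)
    (hY : ∀ j, DifferentiableAt ℝ (fun q => Y q i j) p) : (curvature X Y p *ᵥ Ψ p) i = 0 := by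
  have hUp : U ∈ 𝓝 p := hU.mem_nhds hp
  have hΨ : ∀ j, DifferentiableAt ℝ (fun q => Ψ q j) p := fun j =>
    (h.differentiableOn j).differentiableAt hUp
  have hclosed : pdy (fun q => ∑ j, X q i j * Ψ q j) p = pdx (fun q => ∑ j, Y q i j * Ψ q j) p :=
    pdy_eq_pdx_of_eventuallyEq ((h.differentiableOn i).eventually_differentiableAt hUp)
      ((h.pdx_eq i).eventuallyEq_of_mem hUp) ((h.pdy_eq i).eventuallyEq_of_mem hUp)
      (by fun_prop) (by fun_prop)
  have hpdy : pdy (fun q => ∑ j, X q i j * Ψ q j) p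
      = ∑ j, pdy (fun q => X q i j) p * Ψ p j + (X p *ᵥ (Y p *ᵥ Ψ p)) i := by
    rw [pdy_sum fun j _ => (hX j).fun_mul (hΨ j), mulVec, dotProduct, ← Finset.sum_add_distrib]
    exact Finset.sum_congr rfl fun j _ => by rw [pdy_mul (hX j) (hΨ j), h.pdy_eq j hp]
  have hpdx : pdx (fun q => ∑ j, Y q i j * Ψ q j) p
      = ∑ j, pdx (fun q => Y q i j) p * Ψ p j + (Y p *ᵥ (X p *ᵥ Ψ p)) i := by
    rw [pdx_sum fun j _ => (hY j).fun_mul (hΨ j), mulVec, dotProduct, ← Finset.sum_add_distrib]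
    exact Finset.sum_congr rfl fun j _ => by rw [pdx_mul (hY j) (hΨ j), h.pdx_eq j hp]
  rw [hpdy, hpdx] at hclosed
  rw [curvature, add_mulVec, sub_mulVec, ← mulVec_mulVec, ← mulVec_mulVec, Pi.add_apply,
    Pi.sub_apply, mulVec, dotProduct]
  simp only [of_apply, sub_mul, Finset.sum_sub_distrib]
  linear_combination hclosed

end Parallel

namespace LiouvilleSystem

/-- The unknowns `(ψ₁, ψ₂, ψ₃, 2∂ₓψ₂, 2∂_yψ₂, 2∂ₓ∂_yψ₂)` of the prolonged system. -/
noncomputable def prolongation (ψ1 ψ2 ψ3 : ℝ × ℝ → ℝ) (p : ℝ × ℝ) : Fin 6 → ℝ :=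
  ![ψ1 p, ψ2 p, ψ3 p, 2 * pdx ψ2 p, 2 * pdy ψ2 p, 2 * pdx (pdy ψ2) p]

/-- The matrix of `∂ₓ` in the prolonged system: with the unknowns of `prolongation`, row `3` comes
from `∂_y∂ₓψ₁ = ∂ₓ∂_yψ₁`, and row `5` from differentiating row `3` in `y`. -/
noncomputable def matrixX (A0 A1 A2 A3 : ℝ × ℝ → ℝ) (p : ℝ × ℝ) : Matrix (Fin 6) (Fin 6) ℝ :=
  !![(2/3) * A1 p, -2 * A0 p, 0, 0, 0, 0;
    0, 0, 0, 1/2, 0, 0;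
    2 * A3 p, (2/3) * A2 p, -(4/3) * A1 p, 0, -1, 0;
    (4/3) * pdx A2 p - (2/3) * pdy A1 p - 4 * A0 p * A3 p,
      2 * pdy A0 p - (2/3) * pdx A1 p - 4 * A0 p * A2 p + (4/9) * A1 p * A1 p,
      -2 * pdx A0 p + 4 * A0 p * A1 p,
      (1/3) * A1 p, 3 * A0 p, 0;
    0, 0, 0, 0, 0, 1;
    (4/3) * pdx (pdy A2) p - (2/3) * pdy (pdy A1) p - 4 * A3 p * pdy A0 p + 2 * A0 p * pdy A3 p
        + (16/9) * A2 p * pdx A2 p - (8/9) * A2 p * pdy A1 p + (20/3) * A0 p * A2 p * A3 p,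
      2 * pdy (pdy A0) p - (2/3) * pdx (pdy A1) p - 4 * A2 p * pdy A0 p - 2 * A0 p * pdy A2 p
        + (4/3) * A1 p * pdy A1 p - (8/9) * A1 p * pdx A2 p - 4 * A3 p * pdx A0 p
        - 6 * A0 p * pdx A3 p - (4/3) * A0 p * A1 p * A3 p + (4/3) * A0 p * A2 p * A2 p,
      -2 * pdx (pdy A0) p + 4 * A1 p * pdy A0 p + (4/3) * A0 p * pdy A1 p
        - (2/3) * A0 p * pdx A2 p + (4/3) * A2 p * pdx A0 p - (8/3) * A0 p * A1 p * A2 p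
        - 4 * A0 p * A0 p * A3 p,
      pdy A1 p - (4/3) * pdx A2 p - 5 * A0 p * A3 p,
      4 * pdy A0 p - (1/3) * pdx A1 p - 3 * A0 p * A2 p + (2/9) * A1 p * A1 p,
      (1/3) * A1 p]

/-- The matrix of `∂_y` in the prolonged system: with the unknowns of `prolongation`, row `4` comes
from `∂_y∂ₓψ₃ = ∂ₓ∂_yψ₃`, and row `5` from differentiating row `4` in `x`. -/
noncomputable def matrixY (A0 A1 A2 A3 : ℝ × ℝ → ℝ) (p : ℝ × ℝ) : Matrix (Fin 6) (Fin 6) ℝ :=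
  !![(4/3) * A2 p, -(2/3) * A1 p, -2 * A0 p, -1, 0, 0;
    0, 0, 0, 0, 1/2, 0;
    0, 2 * A3 p, -(2/3) * A2 p, 0, 0, 0;
    0, 0, 0, 0, 0, 1;
    2 * pdy A3 p + 4 * A2 p * A3 p,
      (2/3) * pdy A2 p - 2 * pdx A3 p - 4 * A1 p * A3 p + (4/9) * A2 p * A2 p,
      (2/3) * pdx A2 p - (4/3) * pdy A1 p - 4 * A0 p * A3 p,
      -3 * A3 p, -(1/3) * A2 p, 0;
    2 * pdx (pdy A3) p + 4 * A2 p * pdx A3 p + (4/3) * A3 p * pdx A2 p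
        - (2/3) * A3 p * pdy A1 p + (4/3) * A1 p * pdy A3 p + (8/3) * A1 p * A2 p * A3 p
        + 4 * A0 p * A3 p * A3 p,
      -2 * pdx (pdx A3) p + (2/3) * pdx (pdy A2) p - 4 * A1 p * pdx A3 p - 2 * A3 p * pdx A1 p
        + (4/3) * A2 p * pdx A2 p - (8/9) * A2 p * pdy A1 p - 4 * A0 p * pdy A3 p
        - 6 * A3 p * pdy A0 p + (4/3) * A0 p * A2 p * A3 p - (4/3) * A1 p * A1 p * A3 p,
      -(4/3) * pdx (pdy A1) p + (2/3) * pdx (pdx A2) p - 4 * A0 p * pdx A3 p + 2 * A3 p * pdx A0 p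
        + (16/9) * A1 p * pdy A1 p - (8/9) * A1 p * pdx A2 p - (20/3) * A0 p * A1 p * A3 p,
      -4 * pdx A3 p + (1/3) * pdy A2 p - 3 * A1 p * A3 p + (2/9) * A2 p * A2 p,
      (4/3) * pdy A1 p - pdx A2 p - 5 * A0 p * A3 p,
      -(1/3) * A2 p]

section Prolongation

variable {U : Set (ℝ × ℝ)} {A0 A1 A2 A3 ψ1 ψ2 ψ3 : ℝ × ℝ → ℝ} {p : ℝ × ℝ}

theorem two_mul_pdx_pdx (h : LiouvilleSystem U A0 A1 A2 A3 ψ1 ψ2 ψ3) (hU : IsOpen U)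
    (hA0 : DifferentiableOn ℝ A0 U) (hA1 : DifferentiableOn ℝ A1 U)
    (hA2 : DifferentiableOn ℝ A2 U) (hψ1 : DifferentiableOn ℝ ψ1 U) (hψ2 : ContDiffOn ℝ 2 ψ2 U)
    (hψ3 : DifferentiableOn ℝ ψ3 U) (hp : p ∈ U) :
    2 * pdx (pdx ψ2) p = (matrixX A0 A1 A2 A3 p *ᵥ prolongation ψ1 ψ2 ψ3 p) 3 := by
  have hUp : U ∈ 𝓝 p := hU.mem_nhds hp
  have hA0p := hA0.differentiableAt hUp
  have hA1p := hA1.differentiableAt hUp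
  have hA2p := hA2.differentiableAt hUp
  have hψ1p := hψ1.differentiableAt hUp
  have hψ2p := hψ2.contDiffAt hUp
  have hψ3p := hψ3.differentiableAt hUp
  have hclosed : pdy (fun q => (2/3) * A1 q * ψ1 q - 2 * A0 q * ψ2 q) p
      = pdx (fun q => (4/3) * A2 q * ψ1 q - (2/3) * A1 q * ψ2 q - 2 * A0 q * ψ3 q
          - 2 * pdx ψ2 q) p :=
    pdy_eq_pdx_of_eventuallyEq (hψ1.eventually_differentiableAt hUp)
      (by filter_upwards [hUp] with q hq; exact (h q hq).1)
      (by filter_upwards [hUp] with q hq; linarith [(h q hq).2.2.1])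
      (by fun_prop) (by fun_prop)
  obtain ⟨hψ1x, -, hψ1y, hψ3x⟩ := h p hp
  simp (disch := fun_prop) only [pdx_sub, pdx_mul, pdx_const, pdy_sub, pdy_mul, pdy_const]
    at hclosed
  simp only [matrixX, prolongation, mulVec, dotProduct, Fin.sum_univ_six, of_apply, cons_val]
  linear_combination hclosed + (4/3) * A2 p * hψ1x - (2/3) * A1 p * hψ1y - 2 * A0 p * hψ3x

theorem two_mul_pdy_pdy (h : LiouvilleSystem U A0 A1 A2 A3 ψ1 ψ2 ψ3) (hU : IsOpen U)
    (hA1 : DifferentiableOn ℝ A1 U) (hA2 : DifferentiableOn ℝ A2 U)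
    (hA3 : DifferentiableOn ℝ A3 U) (hψ1 : DifferentiableOn ℝ ψ1 U) (hψ2 : ContDiffOn ℝ 2 ψ2 U)
    (hψ3 : DifferentiableOn ℝ ψ3 U) (hp : p ∈ U) :
    2 * pdy (pdy ψ2) p = (matrixY A0 A1 A2 A3 p *ᵥ prolongation ψ1 ψ2 ψ3 p) 4 := by
  have hUp : U ∈ 𝓝 p := hU.mem_nhds hp
  have hA1p := hA1.differentiableAt hUp
  have hA2p := hA2.differentiableAt hUp
  have hA3p := hA3.differentiableAt hUp
  have hψ1p := hψ1.differentiableAt hUp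
  have hψ2p := hψ2.contDiffAt hUp
  have hψ3p := hψ3.differentiableAt hUp
  have hclosed : pdy (fun q => 2 * A3 q * ψ1 q - (4/3) * A1 q * ψ3 q + (2/3) * A2 q * ψ2 q
          - 2 * pdy ψ2 q) p
      = pdx (fun q => 2 * A3 q * ψ2 q - (2/3) * A2 q * ψ3 q) p :=
    pdy_eq_pdx_of_eventuallyEq (hψ3.eventually_differentiableAt hUp)
      (by filter_upwards [hUp] with q hq; linarith [(h q hq).2.2.2])
      (by filter_upwards [hUp] with q hq; exact (h q hq).2.1)
      (by fun_prop) (by fun_prop)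
  obtain ⟨-, hψ3y, hψ1y, hψ3x⟩ := h p hp
  simp (disch := fun_prop) only [pdx_sub, pdx_mul, pdx_const, pdy_add, pdy_sub, pdy_mul,
    pdy_const] at hclosed
  simp only [matrixY, prolongation, mulVec, dotProduct, Fin.sum_univ_six, of_apply, cons_val]
  linear_combination -hclosed + 2 * A3 p * hψ1y - (4/3) * A1 p * hψ3y + (2/3) * A2 p * hψ3x

theorem two_mul_pdx_pdx_pdy (h : LiouvilleSystem U A0 A1 A2 A3 ψ1 ψ2 ψ3) (hU : IsOpen U)
    (hA0 : ContDiffOn ℝ 2 A0 U) (hA1 : ContDiffOn ℝ 2 A1 U) (hA2 : ContDiffOn ℝ 2 A2 U)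
    (hA3 : ContDiffOn ℝ 2 A3 U) (hψ1 : DifferentiableOn ℝ ψ1 U) (hψ2 : ContDiffOn ℝ 3 ψ2 U)
    (hψ3 : DifferentiableOn ℝ ψ3 U) (hp : p ∈ U) :
    2 * pdx (pdx (pdy ψ2)) p = (matrixX A0 A1 A2 A3 p *ᵥ prolongation ψ1 ψ2 ψ3 p) 5 := by
  have hUp : U ∈ 𝓝 p := hU.mem_nhds hp
  have hA0p := hA0.contDiffAt hUp
  have hA1p := hA1.contDiffAt hUp
  have hA2p := hA2.contDiffAt hUp
  have hA3p := hA3.contDiffAt hUp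
  have hψ1p := hψ1.differentiableAt hUp
  have hψ2p := hψ2.contDiffAt hUp
  have hψ3p := hψ3.differentiableAt hUp
  have hxx : pdx (pdx ψ2) =ᶠ[𝓝 p]
      fun q => (1/2) * (matrixX A0 A1 A2 A3 q *ᵥ prolongation ψ1 ψ2 ψ3 q) 3 := by
    filter_upwards [hUp] with q hq
    rw [← two_mul_pdx_pdx h hU (hA0.differentiableOn two_ne_zero)
      (hA1.differentiableOn two_ne_zero) (hA2.differentiableOn two_ne_zero) hψ1
      (hψ2.of_le (by norm_num)) hψ3 hq]
    ring
  have hyy := two_mul_pdy_pdy h hU (hA1.differentiableOn two_ne_zero)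
      (hA2.differentiableOn two_ne_zero) (hA3.differentiableOn two_ne_zero) hψ1
      (hψ2.of_le (by norm_num)) hψ3 hp
  obtain ⟨-, hψ3y, hψ1y, -⟩ := h p hp
  rw [← pdx_pdy_pdx hψ2p, ← pdy_pdx (contDiffAt_two_pdx hψ2p), pdy_congr hxx]
  simp only [matrixX, matrixY, prolongation, mulVec, dotProduct, Fin.sum_univ_six, of_apply,
    cons_val] at hyy ⊢
  simp (disch := fun_prop) only [pdy_add, pdy_sub, pdy_mul, pdy_const, pdy_pdx]
  linear_combination ((4/3) * pdx A2 p - (2/3) * pdy A1 p - 4 * A0 p * A3 p) * hψ1y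
    + (-2 * pdx A0 p + 4 * A0 p * A1 p) * hψ3y + 3 * A0 p * hyy

theorem two_mul_pdy_pdx_pdy (h : LiouvilleSystem U A0 A1 A2 A3 ψ1 ψ2 ψ3) (hU : IsOpen U)
    (hA0 : ContDiffOn ℝ 2 A0 U) (hA1 : ContDiffOn ℝ 2 A1 U) (hA2 : ContDiffOn ℝ 2 A2 U)
    (hA3 : ContDiffOn ℝ 2 A3 U) (hψ1 : DifferentiableOn ℝ ψ1 U) (hψ2 : ContDiffOn ℝ 3 ψ2 U)
    (hψ3 : DifferentiableOn ℝ ψ3 U) (hp : p ∈ U) :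
    2 * pdy (pdx (pdy ψ2)) p = (matrixY A0 A1 A2 A3 p *ᵥ prolongation ψ1 ψ2 ψ3 p) 5 := by
  have hUp : U ∈ 𝓝 p := hU.mem_nhds hp
  have hA0p := hA0.contDiffAt hUp
  have hA1p := hA1.contDiffAt hUp
  have hA2p := hA2.contDiffAt hUp
  have hA3p := hA3.contDiffAt hUp
  have hψ1p := hψ1.differentiableAt hUp
  have hψ2p := hψ2.contDiffAt hUp
  have hψ3p := hψ3.differentiableAt hUp
  have hyy : pdy (pdy ψ2) =ᶠ[𝓝 p]
      fun q => (1/2) * (matrixY A0 A1 A2 A3 q *ᵥ prolongation ψ1 ψ2 ψ3 q) 4 := by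
    filter_upwards [hUp] with q hq
    rw [← two_mul_pdy_pdy h hU (hA1.differentiableOn two_ne_zero)
      (hA2.differentiableOn two_ne_zero) (hA3.differentiableOn two_ne_zero) hψ1
      (hψ2.of_le (by norm_num)) hψ3 hq]
    ring
  have hxx := two_mul_pdx_pdx (A3 := A3) h hU (hA0.differentiableOn two_ne_zero)
      (hA1.differentiableOn two_ne_zero) (hA2.differentiableOn two_ne_zero) hψ1
      (hψ2.of_le (by norm_num)) hψ3 hp
  obtain ⟨hψ1x, -, -, hψ3x⟩ := h p hp
  rw [pdy_pdx (contDiffAt_two_pdy hψ2p), pdx_congr hyy]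
  simp only [matrixX, matrixY, prolongation, mulVec, dotProduct, Fin.sum_univ_six, of_apply,
    cons_val] at hxx ⊢
  simp (disch := fun_prop) only [pdx_add, pdx_sub, pdx_mul, pdx_const]
  linear_combination (2 * pdy A3 p + 4 * A2 p * A3 p) * hψ1x
    + ((2/3) * pdx A2 p - (4/3) * pdy A1 p - 4 * A0 p * A3 p) * hψ3x - 3 * A3 p * hxx

theorem pdx_prolongation (h : LiouvilleSystem U A0 A1 A2 A3 ψ1 ψ2 ψ3) (hU : IsOpen U)
    (hA0 : ContDiffOn ℝ 2 A0 U) (hA1 : ContDiffOn ℝ 2 A1 U) (hA2 : ContDiffOn ℝ 2 A2 U)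
    (hA3 : ContDiffOn ℝ 2 A3 U) (hψ1 : DifferentiableOn ℝ ψ1 U) (hψ2 : ContDiffOn ℝ 3 ψ2 U)
    (hψ3 : DifferentiableOn ℝ ψ3 U) (hp : p ∈ U) (i : Fin 6) :
    pdx (fun q => prolongation ψ1 ψ2 ψ3 q i) p
      = (matrixX A0 A1 A2 A3 p *ᵥ prolongation ψ1 ψ2 ψ3 p) i := by
  have hψ2p := hψ2.contDiffAt (hU.mem_nhds hp)
  obtain ⟨hψ1x, -, -, hψ3x⟩ := h p hp
  fin_cases i <;> conv_lhs => simp (disch := fun_prop) only [prolongation, Fin.zero_eta,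
    Fin.mk_one, Fin.reduceFinMk, cons_val, pdx_mul, pdx_const, zero_mul, zero_add]
  pick_goal 4
  · exact two_mul_pdx_pdx h hU (hA0.differentiableOn two_ne_zero)
      (hA1.differentiableOn two_ne_zero) (hA2.differentiableOn two_ne_zero) hψ1
      (hψ2.of_le (by norm_num)) hψ3 hp
  pick_goal 5
  · exact two_mul_pdx_pdx_pdy h hU hA0 hA1 hA2 hA3 hψ1 hψ2 hψ3 hp
  all_goals
    simp only [prolongation, matrixX, mulVec, dotProduct, Fin.sum_univ_six, of_apply,
      Fin.zero_eta, Fin.mk_one, Fin.reduceFinMk, cons_val]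
    linarith

theorem pdy_prolongation (h : LiouvilleSystem U A0 A1 A2 A3 ψ1 ψ2 ψ3) (hU : IsOpen U)
    (hA0 : ContDiffOn ℝ 2 A0 U) (hA1 : ContDiffOn ℝ 2 A1 U) (hA2 : ContDiffOn ℝ 2 A2 U)
    (hA3 : ContDiffOn ℝ 2 A3 U) (hψ1 : DifferentiableOn ℝ ψ1 U) (hψ2 : ContDiffOn ℝ 3 ψ2 U)
    (hψ3 : DifferentiableOn ℝ ψ3 U) (hp : p ∈ U) (i : Fin 6) :
    pdy (fun q => prolongation ψ1 ψ2 ψ3 q i) p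
      = (matrixY A0 A1 A2 A3 p *ᵥ prolongation ψ1 ψ2 ψ3 p) i := by
  have hψ2p := hψ2.contDiffAt (hU.mem_nhds hp)
  have hψ2yx : pdy (pdx ψ2) p = pdx (pdy ψ2) p := pdy_pdx (by fun_prop)
  obtain ⟨-, hψ3y, hψ1y, -⟩ := h p hp
  fin_cases i <;> conv_lhs => simp (disch := fun_prop) only [prolongation, Fin.zero_eta,
    Fin.mk_one, Fin.reduceFinMk, cons_val, pdy_mul, pdy_const, zero_mul, zero_add]
  pick_goal 5
  · exact two_mul_pdy_pdy h hU (hA1.differentiableOn two_ne_zero)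
      (hA2.differentiableOn two_ne_zero) (hA3.differentiableOn two_ne_zero) hψ1
      (hψ2.of_le (by norm_num)) hψ3 hp
  pick_goal 5
  · exact two_mul_pdy_pdx_pdy h hU hA0 hA1 hA2 hA3 hψ1 hψ2 hψ3 hp
  all_goals
    simp only [prolongation, matrixY, mulVec, dotProduct, Fin.sum_univ_six, of_apply,
      Fin.zero_eta, Fin.mk_one, Fin.reduceFinMk, cons_val]
    linarith

theorem isParallelOn_prolongation (h : LiouvilleSystem U A0 A1 A2 A3 ψ1 ψ2 ψ3) (hU : IsOpen U)
    (hA0 : ContDiffOn ℝ 2 A0 U) (hA1 : ContDiffOn ℝ 2 A1 U) (hA2 : ContDiffOn ℝ 2 A2 U)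
    (hA3 : ContDiffOn ℝ 2 A3 U) (hψ1 : DifferentiableOn ℝ ψ1 U) (hψ2 : ContDiffOn ℝ 3 ψ2 U)
    (hψ3 : DifferentiableOn ℝ ψ3 U) :
    IsParallelOn U (matrixX A0 A1 A2 A3) (matrixY A0 A1 A2 A3) (prolongation ψ1 ψ2 ψ3) where
  differentiableOn i p hp := by
    have hψ1p := hψ1.differentiableAt (hU.mem_nhds hp)
    have hψ2p := hψ2.contDiffAt (hU.mem_nhds hp)
    have hψ3p := hψ3.differentiableAt (hU.mem_nhds hp)
    refine DifferentiableAt.differentiableWithinAt ?_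
    fin_cases i <;>
      simp only [prolongation, Fin.zero_eta, Fin.mk_one, Fin.reduceFinMk, cons_val] <;> fun_prop
  pdx_eq i _ hp := pdx_prolongation h hU hA0 hA1 hA2 hA3 hψ1 hψ2 hψ3 hp i
  pdy_eq i _ hp := pdy_prolongation h hU hA0 hA1 hA2 hA3 hψ1 hψ2 hψ3 hp i

end Prolongation

section Curvature

variable {A0 A1 A2 A3 : ℝ × ℝ → ℝ} {p : ℝ × ℝ}
  (hA0 : ContDiffAt ℝ 3 A0 p) (hA1 : ContDiffAt ℝ 3 A1 p)
  (hA2 : ContDiffAt ℝ 3 A2 p) (hA3 : ContDiffAt ℝ 3 A3 p)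

include hA0 hA1 hA2 hA3

theorem differentiableAt_matrixX_five (j : Fin 6) :
    DifferentiableAt ℝ (fun q => matrixX A0 A1 A2 A3 q 5 j) p := by
  fin_cases j <;>
    simp only [matrixX, of_apply, Fin.zero_eta, Fin.mk_one, Fin.reduceFinMk, cons_val] <;>
    fun_prop

theorem differentiableAt_matrixY_five (j : Fin 6) :
    DifferentiableAt ℝ (fun q => matrixY A0 A1 A2 A3 q 5 j) p := by
  fin_cases j <;>
    simp only [matrixY, of_apply, Fin.zero_eta, Fin.mk_one, Fin.reduceFinMk, cons_val] <;>
    fun_prop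

theorem curvature_five :
    curvature (matrixX A0 A1 A2 A3) (matrixY A0 A1 A2 A3) p 5 = Vrow A0 A1 A2 A3 p := by
  unfold Vrow Lio1 Lio2
  ext j
  rw [curvature, Matrix.add_apply, Matrix.sub_apply, of_apply, mul_apply, mul_apply,
    Fin.sum_univ_six, Fin.sum_univ_six]
  fin_cases j <;>
    simp only [matrixX, matrixY, of_apply, Fin.zero_eta, Fin.mk_one, Fin.reduceFinMk, cons_val] <;>
    simp (disch := fun_prop) only [pdx_add, pdx_sub, pdx_mul, pdx_const, pdy_add, pdy_sub, pdy_mul,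
      pdy_const, pdy_pdx, pdx_pdy_pdx] <;>
    ring

end Curvature

end LiouvilleSystem

theorem liouville_compatibility_general {U : Set (ℝ × ℝ)} (hU : IsOpen U)
    {A0 A1 A2 A3 ψ1 ψ2 ψ3 : ℝ × ℝ → ℝ}
    (hA0 : ContDiffOn ℝ 3 A0 U) (hA1 : ContDiffOn ℝ 3 A1 U)
    (hA2 : ContDiffOn ℝ 3 A2 U) (hA3 : ContDiffOn ℝ 3 A3 U)
    (hψ1 : DifferentiableOn ℝ ψ1 U) (hψ2 : ContDiffOn ℝ 3 ψ2 U) (hψ3 : DifferentiableOn ℝ ψ3 U)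
    (hsys : LiouvilleSystem U A0 A1 A2 A3 ψ1 ψ2 ψ3) {p : ℝ × ℝ} (hp : p ∈ U) :
    Vrow A0 A1 A2 A3 p 0 * ψ1 p + Vrow A0 A1 A2 A3 p 1 * ψ2 p
      + Vrow A0 A1 A2 A3 p 2 * ψ3 p
      - 10 * Lio2 A0 A1 A2 A3 p * pdx ψ2 p
      - 10 * Lio1 A0 A1 A2 A3 p * pdy ψ2 p = 0 := by
  have hUp : U ∈ 𝓝 p := hU.mem_nhds hp
  have hA0p := hA0.contDiffAt hUp
  have hA1p := hA1.contDiffAt hUp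
  have hA2p := hA2.contDiffAt hUp
  have hA3p := hA3.contDiffAt hUp
  have hle : (2 : WithTop ℕ∞) ≤ 3 := by norm_num
  have hΨ := hsys.isParallelOn_prolongation hU (hA0.of_le hle) (hA1.of_le hle) (hA2.of_le hle)
    (hA3.of_le hle) hψ1 hψ2 hψ3
  have hV : Vrow A0 A1 A2 A3 p ⬝ᵥ LiouvilleSystem.prolongation ψ1 ψ2 ψ3 p = 0 := by
    rw [← LiouvilleSystem.curvature_five hA0p hA1p hA2p hA3p]
    exact hΨ.curvature_mulVec_eq_zero hU hp
      (LiouvilleSystem.differentiableAt_matrixX_five hA0p hA1p hA2p hA3p)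
      (LiouvilleSystem.differentiableAt_matrixY_five hA0p hA1p hA2p hA3p)
  simp only [dotProduct, Fin.sum_univ_six, LiouvilleSystem.prolongation, Vrow, cons_val] at hV ⊢
  linear_combination hV

/-- If `(ψ₁,ψ₂,ψ₃)` is a `C³` solution of the Liouville linear system (with `C³`
coefficients), then `V₁ψ₁ + V₂ψ₂ + V₃ψ₃ − 10L₂∂ₓψ₂ − 10L₁∂_yψ₂ = 0` identically on `U`. -/
theorem liouville_compatibility (U : Set (ℝ × ℝ)) (hU : IsOpen U) (hUconn : IsConnected U)
    (A0 A1 A2 A3 : ℝ × ℝ → ℝ)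
    (hA0 : ContDiffOn ℝ 3 A0 U) (hA1 : ContDiffOn ℝ 3 A1 U)
    (hA2 : ContDiffOn ℝ 3 A2 U) (hA3 : ContDiffOn ℝ 3 A3 U)
    (ψ1 ψ2 ψ3 : ℝ × ℝ → ℝ)
    (hψ1 : ContDiffOn ℝ 3 ψ1 U) (hψ2 : ContDiffOn ℝ 3 ψ2 U) (hψ3 : ContDiffOn ℝ 3 ψ3 U)
    (hsys : LiouvilleSystem U A0 A1 A2 A3 ψ1 ψ2 ψ3) :
    ∀ p ∈ U,
      Vrow A0 A1 A2 A3 p 0 * ψ1 p + Vrow A0 A1 A2 A3 p 1 * ψ2 p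
        + Vrow A0 A1 A2 A3 p 2 * ψ3 p
        - 10 * Lio2 A0 A1 A2 A3 p * pdx ψ2 p
        - 10 * Lio1 A0 A1 A2 A3 p * pdy ψ2 p = 0 := by
  exact fun _ hp => liouville_compatibility_general hU hA0 hA1 hA2 hA3
    (hψ1.differentiableOn (by norm_num)) hψ2 (hψ3.differentiableOn (by norm_num)) hsys hp
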